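/- For the Hopfield model with M fixed patterns, H_N(ξ,σ) = -N ∑_{μ=1}^M (m_N^μ(σ,ξ))² where m_N^μ(σ,ξ) = (1/N)∑_{i=1}^N ξ_i^μ σ_i, and for every fixed pattern realization ξ ∈ ({-1,1}^N)^M the free energy density is subadditive: N α_N(ξ) ≤ N_1 α_{N_1}(ξ) + N_2 α_{N_2}(ξ) for every decomposition N = N_1 + N_2; consequently, after averaging over i.i.d. symmetric Bernoulli patterns, the quenched free energy E[α_N] converges as N → ∞. -/

import Mathlib

open Finset Filter

noncomputable def spin (b : Bool) : ℝ := if b then 1 else -1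

/-- Overlap of the configuration `σ` with pattern `μ`. -/
noncomputable def overlap (M N : ℕ) (ξ : Fin M → Fin N → Bool) (σ : Fin N → Bool) (μ : Fin M) : ℝ :=
  (1 / (N : ℝ)) * ∑ i, spin (ξ μ i) * spin (σ i)

/-- Hopfield Hamiltonian with `M` patterns on `N` spins. -/
noncomputable def hamHop (M N : ℕ) (ξ : Fin M → Fin N → Bool) (σ : Fin N → Bool) : ℝ :=
  -(N : ℝ) * ∑ μ : Fin M, (overlap M N ξ σ μ) ^ 2

noncomputable def alphaHop (β : ℝ) (M N : ℕ) (ξ : Fin M → Fin N → Bool) : ℝ :=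
  (1 / (N : ℝ)) * Real.log (∑ σ : Fin N → Bool, Real.exp (-β * hamHop M N ξ σ))


theorem hop_div_le (a b x y : ℝ) (ha : 0 < a) (hb : 0 < b) :
    (a + b) * (1 / (a + b) * (x + y)) ^ 2 ≤ a * (1 / a * x) ^ 2 + b * (1 / b * y) ^ 2 := by
  have h : a * (1 / a * x) ^ 2 + b * (1 / b * y) ^ 2 - (a + b) * (1 / (a + b) * (x + y)) ^ 2
      = (b * x - a * y) ^ 2 / (a * b * (a + b)) := by
    have : a + b ≠ 0 := by positivity
    field_simp
    ring
  have h2 : 0 ≤ (b * x - a * y) ^ 2 / (a * b * (a + b)) := by positivity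
  linarith

noncomputable def hopF (β : ℝ) (M N : ℕ) (ξ : Fin M → Fin N → Bool) : ℝ :=
  Real.log (∑ σ : Fin N → Bool, Real.exp (-β * hamHop M N ξ σ))

theorem hop_mul_alpha (β : ℝ) (M N : ℕ) (ξ : Fin M → Fin N → Bool) :
    (N : ℝ) * alphaHop β M N ξ = hopF β M N ξ := by
  rcases Nat.eq_zero_or_pos N with rfl | h
  · simp [hopF, hamHop]
  · have : (N : ℝ) ≠ 0 := by positivity
    unfold alphaHop hopF
    field_simp

theorem ham_append (M N₁ N₂ : ℕ) (ξ : Fin M → Fin (N₁ + N₂) → Bool)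
    (σ : Fin N₁ → Bool) (τ : Fin N₂ → Bool) :
    hamHop M N₁ (fun μ i => ξ μ (Fin.castAdd N₂ i)) σ
      + hamHop M N₂ (fun μ i => ξ μ (Fin.natAdd N₁ i)) τ
      ≤ hamHop M (N₁ + N₂) ξ (Fin.append σ τ) := by
  have key : ((N₁ + N₂ : ℕ) : ℝ) * ∑ μ : Fin M, (overlap M (N₁ + N₂) ξ (Fin.append σ τ) μ) ^ 2 ≤
      (N₁ : ℝ) * ∑ μ : Fin M, (overlap M N₁ (fun μ i => ξ μ (Fin.castAdd N₂ i)) σ μ) ^ 2 +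
      (N₂ : ℝ) * ∑ μ : Fin M, (overlap M N₂ (fun μ i => ξ μ (Fin.natAdd N₁ i)) τ μ) ^ 2 := by
    rw [Finset.mul_sum, Finset.mul_sum, Finset.mul_sum, ← Finset.sum_add_distrib]
    refine Finset.sum_le_sum fun μ _ => ?_
    unfold overlap
    rw [Fin.sum_univ_add]
    simp only [Fin.append_left, Fin.append_right]
    rcases Nat.eq_zero_or_pos N₁ with rfl | h1
    · simp
    rcases Nat.eq_zero_or_pos N₂ with rfl | h2
    · simp
    rw [Nat.cast_add]
    exact hop_div_le _ _ _ _ (by positivity) (by positivity)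
  unfold hamHop
  linarith

theorem hopF_sub (β : ℝ) (hβ : 0 < β) (M N₁ N₂ : ℕ) (ξ : Fin M → Fin (N₁ + N₂) → Bool) :
    hopF β M (N₁ + N₂) ξ ≤ hopF β M N₁ (fun μ i => ξ μ (Fin.castAdd N₂ i))
      + hopF β M N₂ (fun μ i => ξ μ (Fin.natAdd N₁ i)) := by
  unfold hopF
  have pos : ∀ (N : ℕ) (ξ : Fin M → Fin N → Bool),
      0 < ∑ σ : Fin N → Bool, Real.exp (-β * hamHop M N ξ σ) := fun N ξ =>
    Finset.sum_pos (fun _ _ => Real.exp_pos _) Finset.univ_nonempty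
  rw [← Real.log_mul (pos _ _).ne' (pos _ _).ne']
  refine Real.log_le_log (pos _ _) ?_
  rw [← Equiv.sum_comp (Fin.appendEquiv N₁ N₂), Fintype.sum_prod_type, Finset.sum_mul_sum]
  refine Finset.sum_le_sum fun σ _ => Finset.sum_le_sum fun τ _ => ?_
  rw [← Real.exp_add]
  refine Real.exp_le_exp.2 ?_
  have := mul_le_mul_of_nonneg_left (ham_append M N₁ N₂ ξ σ τ) hβ.le
  simp only [Fin.appendEquiv, Equiv.coe_fn_mk]
  linarith

theorem hopF_nonneg (β : ℝ) (hβ : 0 < β) (M N : ℕ) (ξ : Fin M → Fin N → Bool) :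
    0 ≤ hopF β M N ξ := by
  refine Real.log_nonneg ?_
  have h : ∀ σ : Fin N → Bool, 1 ≤ Real.exp (-β * hamHop M N ξ σ) := fun σ => by
    refine Real.one_le_exp ?_
    have : -β * hamHop M N ξ σ = β * (N * ∑ μ : Fin M, (overlap M N ξ σ μ) ^ 2) := by
      unfold hamHop; ring
    rw [this]
    positivity
  exact (h (fun _ => true)).trans (Finset.single_le_sum
    (f := fun σ : Fin N → Bool => Real.exp (-β * hamHop M N ξ σ))
    (fun σ _ => (Real.exp_pos _).le) (Finset.mem_univ _))

noncomputable def hopU (β : ℝ) (M N : ℕ) : ℝ :=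
  (∑ ξ : Fin M → Fin N → Bool, hopF β M N ξ) / (2 : ℝ) ^ (M * N)

def hopEquiv (M N₁ N₂ : ℕ) :
    ((Fin M → Fin N₁ → Bool) × (Fin M → Fin N₂ → Bool)) ≃ (Fin M → Fin (N₁ + N₂) → Bool) where
  toFun p := fun μ => Fin.append (p.1 μ) (p.2 μ)
  invFun ξ := (fun μ i => ξ μ (Fin.castAdd N₂ i), fun μ i => ξ μ (Fin.natAdd N₁ i))
  left_inv p := by ext <;> simp
  right_inv ξ := by
    funext μ
    exact Fin.append_castAdd_natAdd

theorem hop_card (M N : ℕ) :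
    (Fintype.card (Fin M → Fin N → Bool) : ℝ) = (2 : ℝ) ^ (M * N) := by
  simp [← pow_mul, mul_comm]

theorem hopU_sub (β : ℝ) (hβ : 0 < β) (M : ℕ) : Subadditive (hopU β M) := by
  intro N₁ N₂
  have h : ∑ ξ : Fin M → Fin (N₁ + N₂) → Bool, hopF β M (N₁ + N₂) ξ ≤
      (2 : ℝ) ^ (M * N₂) * ∑ ξ : Fin M → Fin N₁ → Bool, hopF β M N₁ ξ +
      (2 : ℝ) ^ (M * N₁) * ∑ ξ : Fin M → Fin N₂ → Bool, hopF β M N₂ ξ := by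
    refine (Finset.sum_le_sum fun ξ _ => hopF_sub β hβ M N₁ N₂ ξ).trans ?_
    rw [← Equiv.sum_comp (hopEquiv M N₁ N₂), Fintype.sum_prod_type]
    simp only [hopEquiv, Equiv.coe_fn_mk, Fin.append_left, Fin.append_right,
      Finset.sum_add_distrib, Finset.sum_const, Finset.card_univ, nsmul_eq_mul, hop_card,
      Finset.mul_sum]
    exact le_rfl
  unfold hopU
  rw [div_add_div _ _ (by positivity) (by positivity), mul_add, pow_add]
  gcongr
  linarith

/-- the Hopfield free energy is subadditive pointwise in the patterns, and the
quenched (pattern-averaged) free energy density converges. -/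
theorem hopfield_limit (β : ℝ) (hβ : 0 < β) (M : ℕ) (hM : 1 ≤ M) :
    (∀ N₁ N₂ : ℕ, 1 ≤ N₁ → 1 ≤ N₂ → ∀ ξ : Fin M → Fin (N₁ + N₂) → Bool,
      ((N₁ + N₂ : ℝ)) * alphaHop β M (N₁ + N₂) ξ ≤
        (N₁ : ℝ) * alphaHop β M N₁ (fun μ i => ξ μ (Fin.castAdd N₂ i))
        + (N₂ : ℝ) * alphaHop β M N₂ (fun μ i => ξ μ (Fin.natAdd N₁ i))) ∧
    ∃ L : ℝ, Tendsto (fun N : ℕ =>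
        (∑ ξ : Fin M → Fin N → Bool, alphaHop β M N ξ) / (2 : ℝ) ^ (M * N))
      atTop (nhds L) := by
  refine ⟨fun N₁ N₂ _ _ ξ => ?_, (hopU_sub β hβ M).lim, ?_⟩
  · have := hopF_sub β hβ M N₁ N₂ ξ
    rw [← hop_mul_alpha, ← hop_mul_alpha, ← hop_mul_alpha, Nat.cast_add] at this
    exact this
  · have hb : BddBelow (Set.range fun n : ℕ => hopU β M n / n) := by
      refine ⟨0, ?_⟩
      rintro _ ⟨n, rfl⟩
      have : 0 ≤ hopU β M n :=
        div_nonneg (Finset.sum_nonneg fun ξ _ => hopF_nonneg β hβ M n ξ) (by positivity)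
      positivity
    refine ((hopU_sub β hβ M).tendsto_lim hb).congr fun N => ?_
    have : ∀ ξ : Fin M → Fin N → Bool, alphaHop β M N ξ = (1 / (N : ℝ)) * hopF β M N ξ :=
      fun _ => rfl
    simp only [this, ← Finset.mul_sum, hopU]
    ring
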